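/- Let κ := 0.0115, τ := (0.5−κ)/(0.5+κ), γ_κ := 1 + (0.5+κ)²/(0.5−κ), and f(z) := 1 + z·(0.5+κ)²/(1 − z·(0.5+κ)). Let T be a natural number and p, a, b : ℕ → ℝ sequences such that for all t < T: 0 < p(t) ≤ 1, a(t) ≥ 0 and b(t) ≥ 0. Define Y(t) := Σ_{s<t} a(s), Z(t) := Σ_{s<t} b(s), α(t) := (0.5+κ)/(1 − (0.5+κ)·Y(t)), β(t) := (0.5+κ)/(1 − (0.5+κ)·Z(t)), and suppose for all t < T: a(t) ≤ p(t)·(1 − Y(t)), b(t) ≤ p(t)·(1 − Z(t)), Y(t+1) ≤ τ and Z(t+1) ≤ τ. Define P(t) := Π_{s<t} (1 − a(s)·α(s)) and Q(t) := Π_{s<t} (1 − b(s)·β(s)). Let J : ℕ → ℝ satisfy J(0) ≤ 1 and, for all t < T, J(t+1) ≤ J(t) · ( (1 − a(t)·α(t))·(1 − b(t)·β(t)) + (1/p(t) − 1)·a(t)·α(t)·b(t)·β(t) ). Then J(T) ≤ γ_κ · P(T) · Q(T). -/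

import Mathlib

/-!
Write `c = 0.5 + kappa`. Since `1 - a t * α t = (1 - c Y (t+1)) / (1 - c Y t)`, the products telescope
to `P t = 1 - c Y t` and `Q t = 1 - c Z t`. Passing from `t` to `t + 1` therefore multiplies the bound on
`J / (P Q)` by `1 + c² m / ((1 - c Y') (1 - c Z'))`, where `Y' = Y (t+1)`, `Z' = Z (t+1)` and
`m = (1/p - 1) a b`. The constraints on `a` and `b` give `m ≤ b (1 - Y')` and `m ≤ a (1 - Z')`, hence
`m² ≤ a b (1 - Y') (1 - Z')`. As `c² (1 - y) ≤ 0.3 (1 - c y)²` for all `y`, the arithmetic-geometric mean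
inequality separates the two users (`cross_term_le`): the relative increase is at most `0.15 (a + b)`.
So `J t ≤ exp (0.15 (Y t + Z t)) P t Q t`, and `Y, Z ≤ 1` with `exp 0.3 ≤ 1 / 0.7 < gammaK` finishes.
-/

noncomputable def kappa : ℝ := 0.0115

noncomputable def tau : ℝ := (0.5 - kappa) / (0.5 + kappa)

noncomputable def gammaK : ℝ := 1 + (0.5 + kappa)^2 / (0.5 - kappa)

noncomputable def f (z : ℝ) : ℝ := 1 + z * (0.5 + kappa)^2 / (1 - z * (0.5 + kappa))

/-- Each factor is `(1 - c Y (t+1)) / (1 - c Y t)`, so the product telescopes. -/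
lemma prod_telescope (c : ℝ) (a Y α : ℕ → ℝ) (hY : ∀ t, Y t = ∑ s ∈ Finset.range t, a s)
    (hα : ∀ t, α t = c / (1 - c * Y t)) (n : ℕ) (hpos : ∀ t ≤ n, 0 < 1 - c * Y t) :
    ∏ s ∈ Finset.range n, (1 - a s * α s) = 1 - c * Y n := by
  induction n with
  | zero => simp [hY]
  | succ k ih =>
    have hk : 1 - c * Y k ≠ 0 := (hpos k (Nat.le_succ k)).ne'
    have hs : Y (k + 1) = Y k + a k := by rw [hY, hY, Finset.sum_range_succ]
    rw [Finset.prod_range_succ, ih fun t ht => hpos t (ht.trans (Nat.le_succ k)), hα, hs]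
    field_simp
    ring

lemma sq_mul_one_sub_le (y : ℝ) :
    (0.5115 : ℝ) ^ 2 * (1 - y) ≤ 0.3 * (1 - 0.5115 * y) ^ 2 := by
  nlinarith [sq_nonneg (y - 0.29)]

/-- The joint-availability correction `c² m`, with `m` dominated both by `a (1 - z)` and by
`b (1 - y)`, is at most `0.15 (a + b)` relative to `(1 - c y) (1 - c z)`. -/
lemma cross_term_le {a b y z m : ℝ} (ha : 0 ≤ a) (hb : 0 ≤ b) (hm : 0 ≤ m)
    (hy : y ≤ 1) (hz : z ≤ 1) (hma : m ≤ a * (1 - z)) (hmb : m ≤ b * (1 - y)) :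
    0.5115 ^ 2 * m ≤ 0.15 * (a + b) * ((1 - 0.5115 * y) * (1 - 0.5115 * z)) := by
  have hU : 0 ≤ 1 - 0.5115 * y := by linarith
  have hV : 0 ≤ 1 - 0.5115 * z := by linarith
  refine le_of_pow_le_pow_left₀ two_ne_zero (by positivity) ?_
  calc (0.5115 ^ 2 * m) ^ 2 = 0.5115 ^ 2 * 0.5115 ^ 2 * (m * m) := by ring
    _ ≤ 0.5115 ^ 2 * 0.5115 ^ 2 * ((a * (1 - z)) * (b * (1 - y))) := by
        gcongr
    _ = a * b * ((0.5115 ^ 2 * (1 - y)) * (0.5115 ^ 2 * (1 - z))) := by ring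
    _ ≤ a * b * ((0.3 * (1 - 0.5115 * y) ^ 2) * (0.3 * (1 - 0.5115 * z) ^ 2)) := by
        have h1 : 0 ≤ 1 - z := by linarith
        exact mul_le_mul_of_nonneg_left (mul_le_mul (sq_mul_one_sub_le y) (sq_mul_one_sub_le z)
          (by positivity) (by positivity)) (mul_nonneg ha hb)
    _ = 0.09 * (a * b) * ((1 - 0.5115 * y) * (1 - 0.5115 * z)) ^ 2 := by ring
    _ ≤ (0.15 * (a + b)) ^ 2 * ((1 - 0.5115 * y) * (1 - 0.5115 * z)) ^ 2 := by
        gcongr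
        nlinarith [sq_nonneg (a - b)]
    _ = _ := by ring

/-- One step of the recursion preserves `J ≤ exp (0.15 (y + z)) (1 - c y) (1 - c z)`. -/
lemma step_le {p a b y z j : ℝ} (hp0 : 0 < p) (hp1 : p ≤ 1) (ha : 0 ≤ a) (hb : 0 ≤ b)
    (hay : a ≤ p * (1 - y)) (hbz : b ≤ p * (1 - z)) (hy : y + a ≤ 1) (hz : z + b ≤ 1)
    (hj : j ≤ Real.exp (0.15 * (y + z)) * ((1 - 0.5115 * y) * (1 - 0.5115 * z))) :
    j * ((1 - a * (0.5115 / (1 - 0.5115 * y))) * (1 - b * (0.5115 / (1 - 0.5115 * z)))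
        + (1 / p - 1) * a * (0.5115 / (1 - 0.5115 * y)) * b * (0.5115 / (1 - 0.5115 * z)))
      ≤ Real.exp (0.15 * ((y + a) + (z + b))) *
        ((1 - 0.5115 * (y + a)) * (1 - 0.5115 * (z + b))) := by
  have hu : 0 < 1 - 0.5115 * y := by linarith
  have hv : 0 < 1 - 0.5115 * z := by linarith
  have hU : 0 < 1 - 0.5115 * (y + a) := by linarith
  have hV : 0 < 1 - 0.5115 * (z + b) := by linarith
  have hq : 0 ≤ 1 / p - 1 := by
    rw [sub_nonneg, le_div_iff₀ hp0]
    linarith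
  have hap : a / p ≤ 1 - y := by rwa [div_le_iff₀' hp0]
  have hbp : b / p ≤ 1 - z := by rwa [div_le_iff₀' hp0]
  have hma : (1 / p - 1) * a * b ≤ a * (1 - (z + b)) := by
    have h := mul_le_mul_of_nonneg_left hbp ha
    calc (1 / p - 1) * a * b = a * (b / p) - a * b := by ring
      _ ≤ a * (1 - (z + b)) := by linarith
  have hmb : (1 / p - 1) * a * b ≤ b * (1 - (y + a)) := by
    have h := mul_le_mul_of_nonneg_left hap hb
    calc (1 / p - 1) * a * b = b * (a / p) - a * b := by ring
      _ ≤ b * (1 - (y + a)) := by linarith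
  have hm : 0 ≤ (1 / p - 1) * a * b := by positivity
  have hcross := cross_term_le ha hb hm hy hz hma hmb
  generalize 1 / p - 1 = q at *
  have hfac : (1 - a * (0.5115 / (1 - 0.5115 * y))) * (1 - b * (0.5115 / (1 - 0.5115 * z)))
        + q * a * (0.5115 / (1 - 0.5115 * y)) * b * (0.5115 / (1 - 0.5115 * z))
      = ((1 - 0.5115 * (y + a)) * (1 - 0.5115 * (z + b)) + 0.5115 ^ 2 * (q * a * b))
        / ((1 - 0.5115 * y) * (1 - 0.5115 * z)) := by
    have hu' := hu.ne'
    have hv' := hv.ne'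
    generalize (0.5115 : ℝ) = c at *
    field_simp
    ring
  rw [hfac]
  have hexp : 1 + 0.15 * (a + b) ≤ Real.exp (0.15 * (a + b)) := by
    linarith [Real.add_one_le_exp (0.15 * (a + b))]
  calc _ ≤ Real.exp (0.15 * (y + z)) * ((1 - 0.5115 * y) * (1 - 0.5115 * z)) * _ :=
        mul_le_mul_of_nonneg_right hj (by positivity)
    _ = Real.exp (0.15 * (y + z)) *
        ((1 - 0.5115 * (y + a)) * (1 - 0.5115 * (z + b)) + 0.5115 ^ 2 * (q * a * b)) := by
        rw [mul_assoc, mul_div_cancel₀ _ (mul_pos hu hv).ne']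
    _ ≤ Real.exp (0.15 * (y + z)) * ((1 + 0.15 * (a + b)) *
        ((1 - 0.5115 * (y + a)) * (1 - 0.5115 * (z + b)))) := by
        gcongr
        linarith
    _ ≤ Real.exp (0.15 * (y + z)) * (Real.exp (0.15 * (a + b)) *
        ((1 - 0.5115 * (y + a)) * (1 - 0.5115 * (z + b)))) := by
        gcongr
    _ = _ := by
        rw [← mul_assoc, ← Real.exp_add]
        ring_nf

lemma exp_le_gammaK {x : ℝ} (hx : x ≤ 0.3) : Real.exp x ≤ gammaK := by
  have h := Real.exp_bound_div_one_sub_of_interval (x := 0.3) (by norm_num) (by norm_num)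
  refine (Real.exp_le_exp.2 hx).trans (h.trans ?_)
  norm_num [gammaK, kappa]

theorem stmt_9 (T : ℕ) (p a b : ℕ → ℝ)
    (hp0 : ∀ t < T, 0 < p t) (hp1 : ∀ t < T, p t ≤ 1)
    (ha : ∀ t < T, 0 ≤ a t) (hb : ∀ t < T, 0 ≤ b t)
    (Y Z : ℕ → ℝ)
    (hY : ∀ t, Y t = ∑ s ∈ Finset.range t, a s)
    (hZ : ∀ t, Z t = ∑ s ∈ Finset.range t, b s)
    (α β : ℕ → ℝ)
    (hα : ∀ t, α t = (0.5 + kappa) / (1 - (0.5 + kappa) * Y t))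
    (hβ : ∀ t, β t = (0.5 + kappa) / (1 - (0.5 + kappa) * Z t))
    (haY : ∀ t < T, a t ≤ p t * (1 - Y t))
    (hbZ : ∀ t < T, b t ≤ p t * (1 - Z t))
    (hYτ : ∀ t < T, Y (t + 1) ≤ tau) (hZτ : ∀ t < T, Z (t + 1) ≤ tau)
    (P Q : ℕ → ℝ)
    (hP : ∀ t, P t = ∏ s ∈ Finset.range t, (1 - a s * α s))
    (hQ : ∀ t, Q t = ∏ s ∈ Finset.range t, (1 - b s * β s))
    (J : ℕ → ℝ) (hJ0 : J 0 ≤ 1)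
    (hJ : ∀ t < T, J (t + 1) ≤
      J t * ((1 - a t * α t) * (1 - b t * β t) + (1 / p t - 1) * a t * α t * b t * β t)) :
    J T ≤ gammaK * P T * Q T := by
  have hc : (0.5 : ℝ) + kappa = 0.5115 := by norm_num [kappa]
  have hτ : tau ≤ 1 := by norm_num [tau, kappa]
  rw [hc] at hα hβ
  have hY1 : ∀ t ≤ T, Y t ≤ 1 := by
    rintro (_ | t) ht
    · simp [hY]
    · exact (hYτ t ht).trans hτ
  have hZ1 : ∀ t ≤ T, Z t ≤ 1 := by
    rintro (_ | t) ht
    · simp [hZ]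
    · exact (hZτ t ht).trans hτ
  have hYpos : ∀ t ≤ T, 0 < 1 - 0.5115 * Y t := fun t ht => by linarith [hY1 t ht]
  have hZpos : ∀ t ≤ T, 0 < 1 - 0.5115 * Z t := fun t ht => by linarith [hZ1 t ht]
  have key : ∀ t ≤ T, J t ≤ Real.exp (0.15 * (Y t + Z t)) *
      ((1 - 0.5115 * Y t) * (1 - 0.5115 * Z t)) := by
    intro t
    induction t with
    | zero =>
      intro _
      simpa [hY, hZ] using hJ0
    | succ t ih =>
      intro ht
      have hYs : Y (t + 1) = Y t + a t := by rw [hY, hY, Finset.sum_range_succ]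
      have hZs : Z (t + 1) = Z t + b t := by rw [hZ, hZ, Finset.sum_range_succ]
      have hy := hY1 _ ht
      have hz := hZ1 _ ht
      rw [hYs] at hy ⊢
      rw [hZs] at hz ⊢
      have h := hJ t ht
      rw [hα, hβ] at h
      exact h.trans (step_le (hp0 t ht) (hp1 t ht) (ha t ht) (hb t ht) (haY t ht) (hbZ t ht)
        hy hz (ih (Nat.le_of_lt ht)))
  rw [hP, hQ, prod_telescope _ a Y α hY hα T hYpos, prod_telescope _ b Z β hZ hβ T hZpos,
    mul_assoc]
  refine (key T le_rfl).trans (mul_le_mul_of_nonneg_right (exp_le_gammaK ?_)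
    (mul_pos (hYpos T le_rfl) (hZpos T le_rfl)).le)
  linarith [hY1 T le_rfl, hZ1 T le_rfl]
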